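/- Let p be a prime and G a finite powerful p-group. Then Ω₁(G^p), the subgroup generated by the elements of G^p of order dividing p, is abelian. -/

import Mathlib

/-!
In a powerful `p`-group, the lower `p`-series `F 0 = G`, `F (s + 1) = (F s) ^ p [G, F s]` has the
following properties: commutation with `G` raises the level by one (by two when `p = 2`), and every
element of `F (s + 1)` is a `p`-th power of an element of `F s`. The latter holds up to an error in
`F (s + 2)`, and since the series reaches the trivial subgroup, the error can be removed by
successive approximation.

For such a filtration, three statements hold for all `t` and all levels `s ≥ 1`, by simultaneous
reverse induction on `s`:

* a product of two elements of order dividing `p ^ t`, one of them in `F s`, has order dividing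
  `p ^ t`;
* if `z ∈ F s` and `y ∈ G` have order dividing `p ^ (t + 1)`, then `⁅y, z⁆` has order dividing
  `p ^ t`;
* the same for `z ∈ F (s + 1)`, with the order of `y` only assumed to divide `p ^ (t + 2)`.

By the first statement the elements of order dividing `p ^ t` in a deeper term of the filtration
form a normal subgroup `N`. For the other two, write `z = a ^ p`: modulo `N` the commutator
`⁅y, a ^ p⁆` is `⁅y, a⁆ ^ p`, because the iterated commutators that interfere lie deeper and are
controlled by the third statement. The first statement then follows from computing `(y * h) ^ p`
modulo `N`.

For `s = 1` and `t = 0`, the second statement says that elements of order dividing `p`, one of them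
in `F 1`, commute; and `G ^ p ≤ F 1`.
-/

/-- The subgroup generated by the `n`-th powers of the elements of `H`. -/
def subgroupPow {G : Type*} [Group G] (H : Subgroup G) (n : ℕ) : Subgroup G :=
  Subgroup.closure {x | ∃ h ∈ H, h ^ n = x}

/-- `Ω_i(H)`: the subgroup generated by the elements of `H` whose order divides `p ^ i`. -/
def omegaSubgroup {G : Type*} [Group G] (p i : ℕ) (H : Subgroup G) : Subgroup G :=
  Subgroup.closure {x | x ∈ H ∧ x ^ p ^ i = 1}

/-- A finite `p`-group `G` is powerful if `[G,G] ≤ G^p` when `p` is odd,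
and `[G,G] ≤ G^4` when `p = 2`. -/
def IsPowerful (p : ℕ) (G : Type*) [Group G] : Prop :=
  if p = 2 then commutator G ≤ subgroupPow (⊤ : Subgroup G) 4
  else commutator G ≤ subgroupPow (⊤ : Subgroup G) p

/-- The subgroup of `n`-th powers of the whole group is normal (indeed characteristic). -/
instance subgroupPow_top_normal {G : Type*} [Group G] (n : ℕ) :
    (subgroupPow (⊤ : Subgroup G) n).Normal := by
  constructor
  intro x hx g
  have key : Subgroup.map (MulAut.conj g).toMonoidHom (subgroupPow (⊤ : Subgroup G) n)
      ≤ subgroupPow (⊤ : Subgroup G) n := by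
    rw [subgroupPow, MonoidHom.map_closure]
    apply Subgroup.closure_le _ |>.mpr
    rintro y ⟨z, ⟨h, -, rfl⟩, rfl⟩
    exact Subgroup.subset_closure ⟨(MulAut.conj g) h, trivial, by
      simp [((MulAut.conj g).toMonoidHom.map_pow h n).symm]⟩
  have hmem : (MulAut.conj g) x ∈
      Subgroup.map (MulAut.conj g).toMonoidHom (subgroupPow (⊤ : Subgroup G) n) :=
    Subgroup.mem_map_of_mem _ hx
  simpa [MulAut.conj_apply] using key hmem

/-- A powerfully central chain `{1} = H 0 ≤ H 1 ≤ ⋯ ≤ H n = G` of length `n`: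
`[H (k+1), G] ≤ (H k)^p` for all `k < n`. -/
def IsPowerfullyCentralChain (p : ℕ) {G : Type*} [Group G] (n : ℕ) (H : ℕ → Subgroup G) : Prop :=
  H 0 = ⊥ ∧ H n = ⊤ ∧ (∀ k, k < n → H k ≤ H (k + 1)) ∧
    ∀ k, k < n → ⁅H (k + 1), (⊤ : Subgroup G)⁆ ≤ subgroupPow (H k) p

/-- A group is powerfully nilpotent if it is powerful and admits a powerfully central chain. -/
def IsPowerfullyNilpotent (p : ℕ) (G : Type*) [Group G] : Prop :=
  IsPowerful p G ∧ ∃ (n : ℕ) (H : ℕ → Subgroup G), IsPowerfullyCentralChain p n H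

/-- The powerful nilpotency class: the least possible length of a powerfully central chain. -/
noncomputable def powerfulNilpotencyClass (p : ℕ) (G : Type*) [Group G] : ℕ :=
  sInf {n | ∃ H : ℕ → Subgroup G, IsPowerfullyCentralChain p n H}

open scoped commutatorElement

/-! ### The power map modulo a normal subgroup -/

section PowerMap

variable {G : Type*} [Group G]

theorem mul_pow_eq_mul_commutator_pow_choose {x y : G} (hx : Commute x ⁅y, x⁆)
    (hy : Commute y ⁅y, x⁆) (n : ℕ) :
    (x * y) ^ n = x ^ n * y ^ n * ⁅y, x⁆ ^ n.choose 2 := by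
  set k := ⁅y, x⁆ with hk
  have pow_mul_left : ∀ m : ℕ, y ^ m * x = x * (k ^ m * y ^ m) := by
    intro m
    have hyx : SemiconjBy x (k * y) y := by
      rw [SemiconjBy, ← mul_assoc, hx.eq, hk, commutatorElement_def]
      group
    rw [← hy.symm.mul_pow, (hyx.pow_right m).eq]
  induction n with
  | zero => simp
  | succ n ih =>
    have hxy : Commute (x * y) (k ^ n.choose 2) := (hx.mul_left hy).pow_right _
    have hkn : Commute (k ^ n) (y ^ (n + 1)) := hy.symm.pow_pow _ _
    have hchoose : (n + 1).choose 2 = n + n.choose 2 := by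
      rw [Nat.choose_succ_succ' n 1, Nat.choose_one_right]
    calc (x * y) ^ (n + 1) = x ^ n * y ^ n * (k ^ n.choose 2 * (x * y)) := by
          rw [pow_succ, ih, mul_assoc]
      _ = x ^ n * (y ^ n * x) * y * k ^ n.choose 2 := by
          rw [← hxy.eq]; simp only [mul_assoc]
      _ = x ^ (n + 1) * (k ^ n * y ^ (n + 1)) * k ^ n.choose 2 := by
          rw [pow_mul_left]; simp only [pow_succ, mul_assoc]
      _ = x ^ (n + 1) * y ^ (n + 1) * k ^ (n + 1).choose 2 := by
          rw [hkn.eq, hchoose, pow_add k]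
          simp only [mul_assoc]

variable {N : Subgroup G}

theorem pow_prime_choose_two_mem {p : ℕ} (hp : p.Prime) {k : G} (hk : k ^ p ∈ N)
    (hk_two : p = 2 → k ∈ N) : k ^ p.choose 2 ∈ N := by
  obtain rfl | hp2 := eq_or_ne p 2
  · simpa using hk_two rfl
  · obtain ⟨m, hm⟩ := hp.dvd_choose_self two_ne_zero (hp.two_le.lt_of_ne' hp2)
    rw [hm, pow_mul]
    exact pow_mem hk m

variable [N.Normal]

theorem mk_commute_iff {x y : G} : Commute (x : G ⧸ N) y ↔ ⁅x, y⁆ ∈ N := by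
  rw [← commutatorElement_eq_one_iff_commute, ← QuotientGroup.eq_one_iff]
  exact Iff.rfl

theorem mul_pow_inv_mul_mem {n : ℕ} {x y : G} (hk : ⁅y, x⁆ ^ n.choose 2 ∈ N)
    (hx : ⁅x, ⁅y, x⁆⁆ ∈ N) (hy : ⁅y, ⁅y, x⁆⁆ ∈ N) : (x ^ n * y ^ n)⁻¹ * (x * y) ^ n ∈ N := by
  have key := mul_pow_eq_mul_commutator_pow_choose (x := (x : G ⧸ N)) (y := (y : G ⧸ N))
    (mk_commute_iff.2 hx) (mk_commute_iff.2 hy) n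
  have hk' : ⁅(y : G ⧸ N), (x : G ⧸ N)⁆ ^ n.choose 2 = 1 := (QuotientGroup.eq_one_iff _).2 hk
  rw [hk', mul_one] at key
  exact QuotientGroup.eq.1 key.symm

/-- The point is that `⁅y, a ^ n⁆ * a ^ n` is the `n`-th power of the conjugate `⁅y, a⁆ * a`
of `a`. -/
theorem commutator_pow_inv_mul_mem {n : ℕ} {a y : G} (hk : ⁅a, ⁅y, a⁆⁆ ^ n.choose 2 ∈ N)
    (hw : ⁅⁅y, a⁆, ⁅a, ⁅y, a⁆⁆⁆ ∈ N) (ha : ⁅a, ⁅a, ⁅y, a⁆⁆⁆ ∈ N) :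
    (⁅y, a⁆ ^ n)⁻¹ * ⁅y, a ^ n⁆ ∈ N := by
  have hconj : (⁅y, a⁆ * a) ^ n = ⁅y, a ^ n⁆ * a ^ n := by
    have : ⁅y, a⁆ * a = y * a * y⁻¹ := by rw [commutatorElement_def]; group
    rw [this, conj_pow, commutatorElement_def]
    group
  have h := Subgroup.Normal.conj_mem ‹_› _ (mul_pow_inv_mul_mem hk hw ha) (a ^ n)
  rw [hconj] at h
  convert h using 1
  group

end PowerMap

/-! ### Filtrations -/

/-- A descending normal filtration of a group in which the `p`-th power map and commutation with
the whole group raise the level by one. For `p = 2` commutation has to raise it by two, reflecting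
the condition `[G, G] ≤ G ^ 4` on powerful `2`-groups. -/
structure IsPCentralFiltration (p : ℕ) {G : Type*} [Group G] (F : ℕ → Subgroup G) : Prop where
  normal : ∀ s, (F s).Normal
  succ_le : ∀ s, F (s + 1) ≤ F s
  pow_mem : ∀ {s : ℕ} {x : G}, x ∈ F s → x ^ p ∈ F (s + 1)
  commutator_mem : ∀ {s : ℕ} {x : G}, x ∈ F s → ∀ g : G, ⁅g, x⁆ ∈ F (s + 1)
  commutator_mem_of_two : p = 2 → ∀ {s : ℕ} {x : G}, x ∈ F s → ∀ g : G, ⁅g, x⁆ ∈ F (s + 2)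

/-- A filtration reaching the trivial subgroup in which every element of `F (s + 1)` is, up to an
error in `F (s + 2)`, a `p`-th power from `F s`. This is what the argument uses of a powerful
`p`-group; that the error can be removed is `IsPowerfulFiltration.exists_pow_eq`. -/
structure IsPowerfulFiltration (p : ℕ) {G : Type*} [Group G] (F : ℕ → Subgroup G) : Prop extends
    IsPCentralFiltration p F where
  exists_eq_bot : ∃ n, F n = ⊥
  exists_approx_root : ∀ {s : ℕ} {u : G}, u ∈ F (s + 1) → ∃ v ∈ F s, (v ^ p)⁻¹ * u ∈ F (s + 2)

namespace IsPCentralFiltration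

variable {G : Type*} [Group G] {p : ℕ} {F : ℕ → Subgroup G}

theorem antitone (hF : IsPCentralFiltration p F) : Antitone F :=
  antitone_nat_of_succ_le hF.succ_le

theorem commutator_mem' (hF : IsPCentralFiltration p F) {s : ℕ} {x : G} (hx : x ∈ F s) (g : G) :
    ⁅x, g⁆ ∈ F (s + 1) :=
  commutatorElement_inv g x ▸ inv_mem (hF.commutator_mem hx g)

theorem commutator_mem_of_two' (hF : IsPCentralFiltration p F) (hp2 : p = 2) {s : ℕ} {x : G}
    (hx : x ∈ F s) (g : G) : ⁅x, g⁆ ∈ F (s + 2) :=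
  commutatorElement_inv g x ▸ inv_mem (hF.commutator_mem_of_two hp2 hx g)

theorem pow_pow_mem (hF : IsPCentralFiltration p F) {s : ℕ} {x : G} (hx : x ∈ F s) (t : ℕ) :
    x ^ p ^ t ∈ F (s + t) := by
  induction t with
  | zero => simpa using hx
  | succ t ih =>
    rw [pow_succ, pow_mul]
    exact hF.pow_mem ih

theorem mul_pow_inv_mul_mem (hF : IsPCentralFiltration p F) (hp : p.Prime) {s : ℕ} (c : G) {e : G}
    (he : e ∈ F s) : (c ^ p * e ^ p)⁻¹ * (c * e) ^ p ∈ F (s + 2) := by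
  have := hF.normal (s + 2)
  have hk : ⁅e, c⁆ ∈ F (s + 1) := hF.commutator_mem' he c
  exact _root_.mul_pow_inv_mul_mem
    (pow_prime_choose_two_mem hp (hF.pow_mem hk) fun hp2 => hF.commutator_mem_of_two' hp2 he c)
    (hF.commutator_mem hk c) (hF.commutator_mem hk e)

theorem mul_pow_pow_inv_mul_mem (hF : IsPCentralFiltration p F) (hp : p.Prime) {s : ℕ} (c : G)
    {e : G} (he : e ∈ F s) (t : ℕ) :
    (c ^ p ^ t * e ^ p ^ t)⁻¹ * (c * e) ^ p ^ t ∈ F (s + t + 1) := by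
  induction t with
  | zero => simp
  | succ t ih =>
    simp only [pow_succ, pow_mul]
    set C := c ^ p ^ t
    set E := e ^ p ^ t
    set n := (C * E)⁻¹ * (c * e) ^ p ^ t with hn
    have hE : E ∈ F (s + t) := hF.pow_pow_mem he t
    have hce : (c * e) ^ p ^ t = C * (E * n) := by rw [hn]; group
    have h_C := hF.mul_pow_inv_mul_mem hp C (mul_mem hE (hF.succ_le _ ih))
    have h_E := hF.succ_le _ (hF.mul_pow_inv_mul_mem hp E ih)
    rw [hce]
    convert mul_mem (mul_mem (hF.pow_mem ih) h_E) h_C using 1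
    group

/-- The elements congruent modulo `F (s + 2)` to a `p`-th power from `F s`. They form a subgroup
because, by `mul_pow_inv_mul_mem`, the `p`-th power map is a homomorphism from `F s`
to `G ⧸ F (s + 2)`. -/
def approxPowers (hF : IsPCentralFiltration p F) (hp : p.Prime) (s : ℕ) : Subgroup G where
  carrier := {u | ∃ v ∈ F s, (v ^ p)⁻¹ * u ∈ F (s + 2)}
  one_mem' := ⟨1, one_mem _, by simp⟩
  mul_mem' := by
    rintro u₁ u₂ ⟨v₁, hv₁, hu₁⟩ ⟨v₂, hv₂, hu₂⟩
    refine ⟨v₁ * v₂, mul_mem hv₁ hv₂, ?_⟩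
    have hu₁' := (hF.normal _).conj_mem _ hu₁ (v₂ ^ p)⁻¹
    convert mul_mem (mul_mem (inv_mem (hF.mul_pow_inv_mul_mem hp v₁ hv₂)) hu₁') hu₂ using 1
    group
  inv_mem' := by
    rintro u ⟨v, hv, hu⟩
    refine ⟨v⁻¹, inv_mem hv, ?_⟩
    convert (hF.normal _).conj_mem _ (inv_mem hu) (v ^ p) using 1
    group

theorem pow_mem_approxPowers (hF : IsPCentralFiltration p F) (hp : p.Prime) {s : ℕ} {x : G}
    (hx : x ∈ F s) : x ^ p ∈ hF.approxPowers hp s :=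
  ⟨x, hx, by simp⟩

theorem commutator_mem_approxPowers (hF : IsPCentralFiltration p F) (hp : p.Prime) (hp2 : p ≠ 2)
    {s : ℕ} {x : G} (hx : x ∈ hF.approxPowers hp s) (g : G) :
    ⁅g, x⁆ ∈ hF.approxPowers hp (s + 1) := by
  have := hF.normal (s + 3)
  obtain ⟨a, ha, hax⟩ := hx
  have hw : ⁅g, a⁆ ∈ F (s + 1) := hF.commutator_mem ha g
  have hk : ⁅a, ⁅g, a⁆⁆ ∈ F (s + 2) := hF.commutator_mem hw a
  have h_pow : (⁅g, a⁆ ^ p)⁻¹ * ⁅g, a ^ p⁆ ∈ F (s + 3) :=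
    commutator_pow_inv_mul_mem
      (pow_prime_choose_two_mem hp (hF.pow_mem hk) fun h => absurd h hp2)
      (hF.commutator_mem hk _) (hF.commutator_mem hk _)
  have h_error := this.conj_mem _ (hF.commutator_mem hax g) (a ^ p)
  refine ⟨⁅g, a⁆, hw, ?_⟩
  convert mul_mem h_pow h_error using 1
  simp only [commutatorElement_def]
  group

end IsPCentralFiltration

/-! ### Torsion elements -/

section Torsion

variable {G : Type*} [Group G]

/-- Elements of order dividing `n` remain so after multiplication by elements of `H` of order
dividing `n`; in particular the latter form a subgroup. -/
def TorsionMulClosed (H : Subgroup G) (n : ℕ) : Prop :=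
  ∀ ⦃y h : G⦄, h ∈ H → y ^ n = 1 → h ^ n = 1 → (y * h) ^ n = 1

/-- Commutators of elements of `H` of order dividing `m` with elements of order dividing `n` have
order dividing `k`. -/
def TorsionCommutatorBound (H : Subgroup G) (m n k : ℕ) : Prop :=
  ∀ ⦃z y : G⦄, z ∈ H → z ^ m = 1 → y ^ n = 1 → ⁅y, z⁆ ^ k = 1

namespace TorsionMulClosed

variable {H K : Subgroup G} {n : ℕ}

theorem mono (hK : TorsionMulClosed K n) (h : H ≤ K) : TorsionMulClosed H n :=
  fun _ _ hh => hK (h hh)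

/-- The subgroup of the elements of `H` of order dividing `n`. -/
def torsion (hH : TorsionMulClosed H n) : Subgroup G where
  carrier := {g | g ∈ H ∧ g ^ n = 1}
  one_mem' := ⟨one_mem _, one_pow _⟩
  mul_mem' ha hb := ⟨mul_mem ha.1 hb.1, hH hb.1 ha.2 hb.2⟩
  inv_mem' ha := ⟨inv_mem ha.1, by rw [inv_pow, ha.2, inv_one]⟩

theorem torsion_normal (hH : TorsionMulClosed H n) (hn : H.Normal) : hH.torsion.Normal where
  conj_mem x hx g := ⟨hn.conj_mem x hx.1 g, by rw [conj_pow, hx.2, mul_one, mul_inv_cancel]⟩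

end TorsionMulClosed

theorem pow_pow_pow_eq_one_iff {p t : ℕ} {g : G} : (g ^ p) ^ p ^ t = 1 ↔ g ^ p ^ (t + 1) = 1 := by
  rw [pow_succ', pow_mul]

theorem pow_pow_succ_eq_one {p t : ℕ} {g : G} (h : g ^ p ^ t = 1) : g ^ p ^ (t + 1) = 1 := by
  rw [pow_succ, pow_mul, h, one_pow]

end Torsion

namespace IsPowerfulFiltration

variable {G : Type*} [Group G] {p : ℕ} {F : ℕ → Subgroup G}

theorem reverse_induction (hF : IsPowerfulFiltration p F) {P : ℕ → Prop}
    (bot : ∀ s, F s = ⊥ → P s) (step : ∀ s, P (s + 1) → P s) (s : ℕ) : P s := by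
  obtain ⟨n, hn⟩ := hF.exists_eq_bot
  obtain hns | hsn := le_total n s
  · exact bot s (eq_bot_iff.2 (hn ▸ hF.antitone hns))
  · exact Nat.decreasingInduction (fun k _ => step k) (bot n hn) hsn

/-! ### Roots by successive approximation -/

theorem exists_approx_pow_root (hF : IsPowerfulFiltration p F) (hp : p.Prime) {s : ℕ} (t : ℕ)
    {u : G} (hu : u ∈ F (s + t)) : ∃ v ∈ F s, (v ^ p ^ t)⁻¹ * u ∈ F (s + t + 1) := by
  induction t generalizing u with
  | zero => exact ⟨u, hu, by simp⟩
  | succ t ih =>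
    obtain ⟨w, hw, hwu⟩ := hF.exists_approx_root hu
    obtain ⟨v, hv, hvw⟩ := ih hw
    refine ⟨v, hv, ?_⟩
    have h_mul := hF.succ_le _ (hF.mul_pow_inv_mul_mem hp (v ^ p ^ t) hvw)
    rw [mul_inv_cancel_left] at h_mul
    rw [pow_succ, pow_mul]
    convert mul_mem (mul_mem (hF.pow_mem hvw) h_mul) hwu using 1
    group

/-- Hensel's lemma for the equation `(c * e) ^ p ^ t = u` in `e`. -/
theorem exists_mul_pow_eq (hF : IsPowerfulFiltration p F) (hp : p.Prime) {s t : ℕ} {c u : G}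
    (h : (c ^ p ^ t)⁻¹ * u ∈ F (s + t)) : ∃ e ∈ F s, (c * e) ^ p ^ t = u := by
  refine hF.reverse_induction
    (P := fun s => ∀ c, (c ^ p ^ t)⁻¹ * u ∈ F (s + t) → ∃ e ∈ F s, (c * e) ^ p ^ t = u)
    (fun s hs c h => ?_) (fun s ih c h => ?_) s c h
  · have h_eq := hF.antitone (Nat.le_add_right s t) h
    rw [hs, Subgroup.mem_bot, inv_mul_eq_one] at h_eq
    exact ⟨1, one_mem _, by rw [mul_one, h_eq]⟩
  · obtain ⟨v, hv, hvu⟩ := hF.exists_approx_pow_root hp t h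
    have h_mul := hF.mul_pow_pow_inv_mul_mem hp c hv t
    have hcv : ((c * v) ^ p ^ t)⁻¹ * u ∈ F (s + 1 + t) := by
      rw [add_right_comm]
      convert mul_mem (inv_mem h_mul) hvu using 1
      group
    obtain ⟨e, he, heu⟩ := ih (c * v) hcv
    exact ⟨v * e, mul_mem hv (hF.succ_le s he), by rw [← mul_assoc, heu]⟩

theorem exists_pow_eq (hF : IsPowerfulFiltration p F) (hp : p.Prime) {s : ℕ} {u : G}
    (hu : u ∈ F (s + 1)) : ∃ v ∈ F s, v ^ p = u := by
  simpa using hF.exists_mul_pow_eq hp (s := s) (t := 1) (c := 1) (u := u) (by simpa using hu)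

/-! ### Torsion in a filtration -/

/-- The `p ^ t`-th power of `c` lies one level deeper than expected, so `c` can be corrected by
some `e ∈ F (s + 1)` to an element `c * e` of order dividing `p ^ t`, and `e` is handled by
induction. -/
theorem pow_eq_one_of_mul_pow_eq_one (hF : IsPowerfulFiltration p F) (hp : p.Prime) {s t : ℕ}
    (hmul : TorsionMulClosed (F s) (p ^ t)) {y c : G} (hc : c ∈ F s) (hy : y ^ p ^ t = 1)
    (hyc : (y * c) ^ p ^ t = 1) : c ^ p ^ t = 1 := by
  refine hF.reverse_induction (P := fun s => TorsionMulClosed (F s) (p ^ t) → ∀ y c, c ∈ F s →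
    y ^ p ^ t = 1 → (y * c) ^ p ^ t = 1 → c ^ p ^ t = 1)
    (fun s hs _ y c hc _ _ => ?_) (fun s ih hmul y c hc hy hyc => ?_) s hmul y c hc hy hyc
  · rw [hs, Subgroup.mem_bot] at hc
    rw [hc, one_pow]
  · have hct : (c ^ p ^ t)⁻¹ * 1 ∈ F (s + 1 + t) := by
      have := hF.mul_pow_pow_inv_mul_mem hp y hc t
      rwa [hyc, hy, one_mul, add_right_comm] at this
    obtain ⟨e, he, hce⟩ := hF.exists_mul_pow_eq hp hct
    have he_mem : e ∈ F s := hF.succ_le s he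
    have hyce : (y * (c * e)) ^ p ^ t = 1 := hmul (mul_mem hc he_mem) hy hce
    have he_inv : e⁻¹ ^ p ^ t = 1 :=
      ih (hmul.mono (hF.succ_le s)) (y * (c * e)) e⁻¹ (inv_mem he) hyce (by
        rwa [← mul_assoc, mul_inv_cancel_right])
    simpa using hmul (inv_mem he_mem) hce he_inv

/-- `y⁻¹ * ⁅y, a⁆` is a conjugate of `y⁻¹`. -/
theorem commutator_pow_eq_one (hF : IsPowerfulFiltration p F) (hp : p.Prime) {s t : ℕ}
    (hmul : TorsionMulClosed (F s) (p ^ t)) {y a : G} (hya : ⁅y, a⁆ ∈ F s) (hy : y ^ p ^ t = 1) :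
    ⁅y, a⁆ ^ p ^ t = 1 := by
  have hy_inv : y⁻¹ ^ p ^ t = 1 := by rw [inv_pow, hy, inv_one]
  have hconj : y⁻¹ * ⁅y, a⁆ = a * y⁻¹ * a⁻¹ := by rw [commutatorElement_def]; group
  refine hF.pow_eq_one_of_mul_pow_eq_one hp hmul hya hy_inv ?_
  rw [hconj, conj_pow, hy_inv, mul_one, mul_inv_cancel]

theorem commutator_pow_eq_one' (hF : IsPowerfulFiltration p F) (hp : p.Prime) {s t : ℕ}
    (hmul : TorsionMulClosed (F s) (p ^ t)) {y a : G} (hay : ⁅a, y⁆ ∈ F s) (hy : y ^ p ^ t = 1) :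
    ⁅a, y⁆ ^ p ^ t = 1 := by
  rw [← commutatorElement_inv] at hay ⊢
  rw [inv_pow, hF.commutator_pow_eq_one hp hmul (inv_mem_iff.1 hay) hy, inv_one]

/-- Modulo the `p ^ t`-torsion of `F (s + 1)`, the power `(y * h) ^ p` is `y ^ p * h ^ p`, because
`⁅h, y⁆` is central of order dividing `p`, and trivial if `p = 2`. -/
theorem torsionMulClosed_of_succ (hF : IsPowerfulFiltration p F) (hp : p.Prime) {s : ℕ}
    (hmul : ∀ t, TorsionMulClosed (F (s + 1)) (p ^ t))
    (hcomm : ∀ t, TorsionCommutatorBound (F (s + 1)) (p ^ (t + 1)) (p ^ (t + 1)) (p ^ t))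
    (hcomm_two : p = 2 →
      ∀ t, TorsionCommutatorBound (F s) (p ^ (t + 1)) (p ^ (t + 1)) (p ^ t)) (t : ℕ) :
    TorsionMulClosed (F s) (p ^ t) := by
  intro y h hh hy hht
  cases t with
  | zero => simp_all only [pow_zero, pow_one, mul_one]
  | succ t =>
    let N := (hmul t).torsion
    have : N.Normal := (hmul t).torsion_normal (hF.normal _)
    have hk : ⁅h, y⁆ ∈ F (s + 1) := hF.commutator_mem' hh y
    have hkt : ⁅h, y⁆ ^ p ^ (t + 1) = 1 := hF.commutator_pow_eq_one hp (hmul _) hk hht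
    have hk_pow : ⁅h, y⁆ ^ p ∈ N := ⟨pow_mem hk p, pow_pow_pow_eq_one_iff.2 hkt⟩
    have hk_two (hp2 : p = 2) : ⁅h, y⁆ ∈ N := by
      refine ⟨hk, ?_⟩
      rw [← commutatorElement_inv, inv_pow, hcomm_two hp2 t hh hht hy, inv_one]
    have h_mod : (y ^ p * h ^ p)⁻¹ * (y * h) ^ p ∈ N :=
      mul_pow_inv_mul_mem (pow_prime_choose_two_mem hp hk_pow hk_two)
        ⟨hF.succ_le _ (hF.commutator_mem hk y), hcomm t hk hkt hy⟩
        ⟨hF.succ_le _ (hF.commutator_mem hk h), hcomm t hk hkt hht⟩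
    have hh_pow : h ^ p ∈ N := ⟨hF.pow_mem hh, pow_pow_pow_eq_one_iff.2 hht⟩
    obtain ⟨hu, hut⟩ := mul_mem hh_pow h_mod
    have h_eq : (y * h) ^ p = y ^ p * (h ^ p * ((y ^ p * h ^ p)⁻¹ * (y * h) ^ p)) := by group
    rw [← pow_pow_pow_eq_one_iff, h_eq]
    exact hmul t hu (pow_pow_pow_eq_one_iff.2 hy) hut

/-- Modulo the `p ^ t`-torsion of `F (s + 2)`, the commutator `⁅y, a ^ p⁆` is `⁅y, a⁆ ^ p`. -/
theorem commutator_pow_pow_eq_one (hF : IsPowerfulFiltration p F) (hp : p.Prime) {s t : ℕ}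
    (hmul : ∀ t, TorsionMulClosed (F (s + 2)) (p ^ t))
    (hcomm : TorsionCommutatorBound (F (s + 2)) (p ^ (t + 1)) (p ^ (t + 2)) (p ^ t)) {a y : G}
    (ha : a ∈ F s) (hat : a ^ p ^ (t + 2) = 1) (hyat : ⁅y, a⁆ ^ p ^ (t + 1) = 1) :
    ⁅y, a ^ p⁆ ^ p ^ t = 1 := by
  let N := (hmul t).torsion
  have : N.Normal := (hmul t).torsion_normal (hF.normal _)
  have hw : ⁅y, a⁆ ∈ F (s + 1) := hF.commutator_mem ha y
  have hk : ⁅a, ⁅y, a⁆⁆ ∈ F (s + 2) := hF.commutator_mem hw a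
  have hkt : ⁅a, ⁅y, a⁆⁆ ^ p ^ (t + 1) = 1 := hF.commutator_pow_eq_one' hp (hmul _) hk hyat
  have hk_pow : ⁅a, ⁅y, a⁆⁆ ^ p ∈ N := ⟨pow_mem hk p, pow_pow_pow_eq_one_iff.2 hkt⟩
  have hk_two (hp2 : p = 2) : ⁅a, ⁅y, a⁆⁆ ∈ N :=
    ⟨hk, hcomm (hF.commutator_mem_of_two hp2 ha y) hyat hat⟩
  have h_mod : (⁅y, a⁆ ^ p)⁻¹ * ⁅y, a ^ p⁆ ∈ N :=
    commutator_pow_inv_mul_mem (pow_prime_choose_two_mem hp hk_pow hk_two)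
      ⟨hF.succ_le _ (hF.commutator_mem hk _), hcomm hk hkt (pow_pow_succ_eq_one hyat)⟩
      ⟨hF.succ_le _ (hF.commutator_mem hk _), hcomm hk hkt hat⟩
  have hw_pow : ⁅y, a⁆ ^ p ∈ N := ⟨hF.pow_mem hw, pow_pow_pow_eq_one_iff.2 hyat⟩
  have h_mem : ⁅y, a ^ p⁆ ∈ N := by simpa only [mul_inv_cancel_left] using mul_mem hw_pow h_mod
  exact h_mem.2

/-- The second bound is the first one level deeper, with the order of the other element allowed to
be larger by a factor `p`. At a fixed level the two descend together from `t + 1` to `t`, starting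
from the exponent of `F s`. -/
theorem torsionCommutatorBound_of_succ (hF : IsPowerfulFiltration p F) (hp : p.Prime) {s : ℕ}
    (hmul : ∀ t, TorsionMulClosed (F (s + 2)) (p ^ t))
    (hmul_odd : p ≠ 2 → ∀ t, TorsionMulClosed (F (s + 1)) (p ^ t))
    (hcomm : ∀ t, TorsionCommutatorBound (F (s + 3)) (p ^ (t + 1)) (p ^ (t + 2)) (p ^ t)) (t : ℕ) :
    TorsionCommutatorBound (F (s + 1)) (p ^ (t + 1)) (p ^ (t + 1)) (p ^ t) ∧
      TorsionCommutatorBound (F (s + 2)) (p ^ (t + 1)) (p ^ (t + 2)) (p ^ t) := by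
  refine hF.reverse_induction (P := fun t =>
    TorsionCommutatorBound (F (s + 1)) (p ^ (t + 1)) (p ^ (t + 1)) (p ^ t) ∧
      TorsionCommutatorBound (F (s + 2)) (p ^ (t + 1)) (p ^ (t + 2)) (p ^ t))
    (fun t ht => ?_) (fun t ih => ?_) t
  · have pow_eq_one {r : ℕ} {x : G} (hx : x ∈ F r) : x ^ p ^ t = 1 := by
      have := hF.antitone (Nat.le_add_left t r) (hF.pow_pow_mem hx t)
      rwa [ht, Subgroup.mem_bot] at this
    exact ⟨fun _ y hz _ _ => pow_eq_one (hF.commutator_mem hz y),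
      fun _ y hz _ _ => pow_eq_one (hF.commutator_mem hz y)⟩
  · have deeper : TorsionCommutatorBound (F (s + 2)) (p ^ (t + 1)) (p ^ (t + 2)) (p ^ t) := by
      intro z y hz hzt hyt
      obtain ⟨a, ha, rfl⟩ := hF.exists_pow_eq hp hz
      rw [pow_pow_pow_eq_one_iff] at hzt
      exact hF.commutator_pow_pow_eq_one hp (fun t => (hmul t).mono (hF.succ_le _)) (hcomm t) ha hzt
        (ih.1 ha hzt hyt)
    refine ⟨fun z y hz hzt hyt => ?_, deeper⟩
    obtain ⟨a, ha, rfl⟩ := hF.exists_pow_eq hp hz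
    rw [pow_pow_pow_eq_one_iff] at hzt
    have hyat : ⁅y, a⁆ ^ p ^ (t + 1) = 1 := by
      by_cases hp2 : p = 2
      · exact hF.commutator_pow_eq_one hp (hmul _) (hF.commutator_mem_of_two hp2 ha y) hyt
      · exact hF.commutator_pow_eq_one hp (hmul_odd hp2 _) (hF.commutator_mem ha y) hyt
    exact hF.commutator_pow_pow_eq_one hp hmul deeper ha hzt hyat

theorem torsionMulClosed_and_torsionCommutatorBound (hF : IsPowerfulFiltration p F)
    (hp : p.Prime) (s t : ℕ) :
    TorsionMulClosed (F (s + 1)) (p ^ t) ∧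
      TorsionCommutatorBound (F (s + 1)) (p ^ (t + 1)) (p ^ (t + 1)) (p ^ t) ∧
      TorsionCommutatorBound (F (s + 2)) (p ^ (t + 1)) (p ^ (t + 2)) (p ^ t) := by
  refine hF.reverse_induction (P := fun s => ∀ t, TorsionMulClosed (F (s + 1)) (p ^ t) ∧
    TorsionCommutatorBound (F (s + 1)) (p ^ (t + 1)) (p ^ (t + 1)) (p ^ t) ∧
    TorsionCommutatorBound (F (s + 2)) (p ^ (t + 1)) (p ^ (t + 2)) (p ^ t))
    (fun s hs t => ?_) (fun s ih => ?_) s t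
  · have eq_one {r : ℕ} {z : G} (hz : z ∈ F (s + r)) : z = 1 := by
      have := hF.antitone (Nat.le_add_right s r) hz
      rwa [hs, Subgroup.mem_bot] at this
    refine ⟨fun y z hz hy _ => ?_, fun z y hz _ _ => ?_, fun z y hz _ _ => ?_⟩
    · rw [eq_one hz, mul_one, hy]
    · rw [eq_one hz, commutatorElement_one_right, one_pow]
    · rw [eq_one hz, commutatorElement_one_right, one_pow]
  · have mul_closed := hF.torsionMulClosed_of_succ hp (fun t => (ih t).1) fun t => (ih t).2.1
    have comm_bound := hF.torsionCommutatorBound_of_succ hp (fun t => (ih t).1)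
      (fun hp2 => mul_closed fun h => absurd h hp2) fun t => (ih t).2.2
    exact fun t => ⟨mul_closed (fun _ t => (comm_bound t).1) t, comm_bound t⟩

theorem commute_of_pow_eq_one (hF : IsPowerfulFiltration p F) (hp : p.Prime) {x y : G}
    (hx : x ∈ F 1) (hxp : x ^ p = 1) (hyp : y ^ p = 1) : Commute y x := by
  have hcomm := (hF.torsionMulClosed_and_torsionCommutatorBound hp 0 0).2.1
  rw [← commutatorElement_eq_one_iff_commute]
  simpa using hcomm hx (by simpa using hxp) (by simpa using hyp)

end IsPowerfulFiltration

/-! ### The lower `p`-series -/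

/-- The lower exponent-`p` central series `F 0 = G`, `F (s + 1) = (F s) ^ p [G, F s]`. -/
def lowerPSeries (p : ℕ) (G : Type*) [Group G] : ℕ → Subgroup G
  | 0 => ⊤
  | s + 1 => subgroupPow (lowerPSeries p G s) p ⊔ ⁅(⊤ : Subgroup G), lowerPSeries p G s⁆

section LowerPSeries

variable {G : Type*} [Group G] {p : ℕ}

theorem pow_mem_subgroupPow {H : Subgroup G} {x : G} (hx : x ∈ H) (n : ℕ) :
    x ^ n ∈ subgroupPow H n :=
  Subgroup.subset_closure ⟨x, hx, rfl⟩

theorem subgroupPow_le {H K : Subgroup G} {n : ℕ} (h : ∀ x ∈ H, x ^ n ∈ K) : subgroupPow H n ≤ K :=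
  (Subgroup.closure_le K).2 fun _ ⟨x, hx, hxn⟩ => hxn ▸ h x hx

theorem subgroupPow_normal {H : Subgroup G} (hH : H.Normal) (n : ℕ) :
    (subgroupPow H n).Normal where
  conj_mem x hx g := by
    suffices subgroupPow H n ≤ (subgroupPow H n).comap (MulAut.conj g).toMonoidHom from this hx
    refine subgroupPow_le fun h hh => ?_
    rw [Subgroup.mem_comap, map_pow]
    exact pow_mem_subgroupPow (hH.conj_mem h hh g) n

namespace lowerPSeries

theorem pow_mem {s : ℕ} {x : G} (hx : x ∈ lowerPSeries p G s) : x ^ p ∈ lowerPSeries p G (s + 1) :=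
  Subgroup.mem_sup_left (pow_mem_subgroupPow hx p)

theorem commutator_mem {s : ℕ} {x : G} (hx : x ∈ lowerPSeries p G s) (g : G) :
    ⁅g, x⁆ ∈ lowerPSeries p G (s + 1) :=
  Subgroup.mem_sup_right (Subgroup.commutator_mem_commutator (Subgroup.mem_top g) hx)

theorem succ_le_iff {s : ℕ} {H : Subgroup G} : lowerPSeries p G (s + 1) ≤ H ↔
    (∀ x ∈ lowerPSeries p G s, x ^ p ∈ H) ∧ ∀ x ∈ lowerPSeries p G s, ∀ g : G, ⁅g, x⁆ ∈ H := by
  refine ⟨fun h => ⟨fun x hx => h (pow_mem hx), fun x hx g => h (commutator_mem hx g)⟩,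
    fun ⟨h_pow, h_comm⟩ => sup_le (subgroupPow_le h_pow) ?_⟩
  exact Subgroup.commutator_le.2 fun g _ x hx => h_comm x hx g

theorem normal (p : ℕ) (G : Type*) [Group G] (s : ℕ) : (lowerPSeries p G s).Normal := by
  induction s with
  | zero => exact inferInstanceAs (⊤ : Subgroup G).Normal
  | succ s ih =>
    have := subgroupPow_normal ih p
    exact Subgroup.sup_normal _ _

theorem succ_le (p : ℕ) (G : Type*) [Group G] (s : ℕ) :
    lowerPSeries p G (s + 1) ≤ lowerPSeries p G s := by
  have := normal p G s
  exact sup_le (subgroupPow_le fun x hx => _root_.pow_mem hx p) (Subgroup.commutator_le_right _ _)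

theorem le_comap {H : Type*} [Group H] (f : G →* H) (s : ℕ) :
    lowerPSeries p G s ≤ (lowerPSeries p H s).comap f := by
  induction s with
  | zero => exact fun _ _ => Subgroup.mem_top _
  | succ s ih =>
    refine succ_le_iff.2 ⟨fun x hx => ?_, fun x hx g => ?_⟩
    · rw [Subgroup.mem_comap, map_pow]
      exact pow_mem (ih hx)
    · rw [Subgroup.mem_comap, map_commutatorElement]
      exact commutator_mem (ih hx) _

open scoped IsMulCommutative in
theorem add_le_map_powMonoidHom_range {n : ℕ} (hn : lowerPSeries p G n ≤ Subgroup.center G)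
    (k : ℕ) : lowerPSeries p G (n + k) ≤
      (powMonoidHom (α := Subgroup.center G) (p ^ k)).range.map (Subgroup.center G).subtype := by
  induction k with
  | zero => exact fun x hx => ⟨⟨x, hn hx⟩, ⟨⟨x, hn hx⟩, by simp⟩, rfl⟩
  | succ k ih =>
    refine succ_le_iff.2 ⟨fun x hx => ?_, fun x hx g => ?_⟩
    · obtain ⟨_, ⟨z, rfl⟩, rfl⟩ := ih hx
      exact ⟨z ^ p ^ (k + 1), ⟨z, rfl⟩, by simp [pow_succ, pow_mul]⟩
    · obtain ⟨z, -, rfl⟩ := ih hx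
      have : Commute g (z : G) := Subgroup.mem_center_iff.1 z.2 g
      exact this.commutator_eq ▸ one_mem _

open scoped IsMulCommutative in
theorem exists_eq_bot [Group.IsNilpotent G] {m : ℕ} (hexp : ∀ g : G, g ^ p ^ m = 1) :
    ∃ n, lowerPSeries p G n = ⊥ := by
  revert hexp
  refine Group.nilpotent_center_quotient_ind
    (P := fun G _ _ => (∀ g : G, g ^ p ^ m = 1) → ∃ n, lowerPSeries p G n = ⊥) G ?_ ?_
  · exact fun G _ _ _ => ⟨0, Subsingleton.elim _ _⟩
  · intro G _ _ ih hexp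
    obtain ⟨n, hn⟩ := ih (QuotientGroup.mk_surjective.forall.2 fun g => by
      rw [← QuotientGroup.mk_pow, hexp, QuotientGroup.mk_one])
    have h_center : lowerPSeries p G n ≤ Subgroup.center G := by
      simpa [hn, MonoidHom.comap_bot] using
        le_comap (p := p) (QuotientGroup.mk' (Subgroup.center G)) n
    refine ⟨n + m, (Subgroup.eq_bot_iff_forall _).2 fun x hx => ?_⟩
    obtain ⟨_, ⟨z, rfl⟩, rfl⟩ := add_le_map_powMonoidHom_range h_center m hx
    simpa using hexp z

/-- The commutators `⁅g, a ^ 2⁆` are congruent to `⁅g, a⁆ ^ 2` three levels down. -/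
theorem commutator_mem_of_two (hG : commutator G ≤ subgroupPow (⊤ : Subgroup G) 4) {s : ℕ} {x : G}
    (hx : x ∈ lowerPSeries 2 G s) (g : G) : ⁅g, x⁆ ∈ lowerPSeries 2 G (s + 2) := by
  induction s generalizing x g with
  | zero =>
    have h_four : subgroupPow (⊤ : Subgroup G) 4 ≤ lowerPSeries 2 G 2 :=
      subgroupPow_le fun y hy => by
        rw [show 4 = 2 * 2 from rfl, pow_mul]
        exact pow_mem (pow_mem (s := 0) hy)
    exact h_four (hG (Subgroup.commutator_mem_commutator (Subgroup.mem_top g) (Subgroup.mem_top x)))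
  | succ s ih =>
    have := normal 2 G (s + 3)
    suffices lowerPSeries 2 G (s + 1) ≤ (Subgroup.center (G ⧸ lowerPSeries 2 G (s + 3))).comap
        (QuotientGroup.mk' _) from
      mk_commute_iff.1 (Subgroup.mem_center_iff.1 (this hx) g)
    have mem_center {z : G} (hz : ∀ g, ⁅g, z⁆ ∈ lowerPSeries 2 G (s + 3)) :
        (z : G ⧸ lowerPSeries 2 G (s + 3)) ∈ Subgroup.center _ :=
      Subgroup.mem_center_iff.2 (QuotientGroup.mk_surjective.forall.2 fun g =>
        mk_commute_iff.2 (hz g))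
    refine succ_le_iff.2 ⟨fun a ha => mem_center fun g => ?_, fun a ha g => mem_center fun h => ?_⟩
    · have hw : ⁅g, a⁆ ∈ lowerPSeries 2 G (s + 2) := ih ha g
      have hk : ⁅a, ⁅g, a⁆⁆ ∈ lowerPSeries 2 G (s + 3) := commutator_mem hw a
      have h_mod : (⁅g, a⁆ ^ 2)⁻¹ * ⁅g, a ^ 2⁆ ∈ lowerPSeries 2 G (s + 3) :=
        commutator_pow_inv_mul_mem (_root_.pow_mem hk _) (succ_le 2 G _ (commutator_mem hk _))
          (succ_le 2 G _ (commutator_mem hk _))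
      simpa only [mul_inv_cancel_left] using mul_mem (pow_mem hw) h_mod
    · exact commutator_mem (ih ha g) h

theorem isPCentralFiltration (hG : IsPowerful p G) :
    IsPCentralFiltration p (lowerPSeries p G) where
  normal := normal p G
  succ_le := succ_le p G
  pow_mem := pow_mem
  commutator_mem := commutator_mem
  commutator_mem_of_two := by
    rintro rfl
    rw [IsPowerful, if_pos rfl] at hG
    exact commutator_mem_of_two hG

theorem succ_le_approxPowers (hp : p.Prime) (hG : IsPowerful p G) (s : ℕ) :
    lowerPSeries p G (s + 1) ≤ (isPCentralFiltration hG).approxPowers hp s := by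
  have hF := isPCentralFiltration hG
  induction s with
  | zero =>
    refine succ_le_iff.2 ⟨fun x hx => hF.pow_mem_approxPowers hp hx, fun x hx g => ?_⟩
    by_cases hp2 : p = 2
    · exact ⟨1, one_mem _, by simpa using hF.commutator_mem_of_two hp2 hx g⟩
    · rw [IsPowerful, if_neg hp2] at hG
      have hgx := hG (Subgroup.commutator_mem_commutator (Subgroup.mem_top g) hx)
      exact subgroupPow_le (fun y hy => hF.pow_mem_approxPowers hp hy) hgx
  | succ s ih =>
    refine succ_le_iff.2 ⟨fun x hx => hF.pow_mem_approxPowers hp hx, fun x hx g => ?_⟩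
    by_cases hp2 : p = 2
    · exact ⟨1, one_mem _, by simpa using hF.commutator_mem_of_two hp2 hx g⟩
    · exact hF.commutator_mem_approxPowers hp hp2 (ih hx) g

theorem isPowerfulFiltration [Group.IsNilpotent G] {m : ℕ} (hp : p.Prime)
    (hexp : ∀ g : G, g ^ p ^ m = 1) (hG : IsPowerful p G) :
    IsPowerfulFiltration p (lowerPSeries p G) where
  toIsPCentralFiltration := isPCentralFiltration hG
  exists_eq_bot := exists_eq_bot hexp
  exists_approx_root hu := succ_le_approxPowers hp hG _ hu

end lowerPSeries

end LowerPSeries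

theorem omega_statement_1_general {p m : ℕ} (hp : p.Prime) {G : Type*} [Group G]
    [Group.IsNilpotent G] (hexp : ∀ g : G, g ^ p ^ m = 1) (hpow : IsPowerful p G) :
    ∀ x ∈ omegaSubgroup p 1 (subgroupPow (⊤ : Subgroup G) p),
      ∀ y ∈ omegaSubgroup p 1 (subgroupPow (⊤ : Subgroup G) p), x * y = y * x := by
  have hF := lowerPSeries.isPowerfulFiltration hp hexp hpow
  have h_le : subgroupPow (⊤ : Subgroup G) p ≤ lowerPSeries p G 1 := le_sup_left
  have h_generators : ∀ x ∈ {x | x ∈ subgroupPow (⊤ : Subgroup G) p ∧ x ^ p ^ 1 = 1},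
      ∀ y ∈ {x | x ∈ subgroupPow (⊤ : Subgroup G) p ∧ x ^ p ^ 1 = 1}, x * y = y * x := by
    rintro x ⟨-, hxp⟩ y ⟨hy, hyp⟩
    rw [pow_one] at hxp hyp
    exact hF.commute_of_pow_eq_one hp (h_le hy) hyp hxp
  have : IsMulCommutative (omegaSubgroup p 1 (subgroupPow (⊤ : Subgroup G) p)) :=
    Subgroup.isMulCommutative_closure h_generators
  exact fun x hx y hy => setLike_mul_comm hx hy

theorem omega_statement_1 (p : ℕ) (hp : p.Prime) (G : Type*) [Group G] [Finite G]
    (hG : IsPGroup p G) (hpow : IsPowerful p G) :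
    ∀ x ∈ omegaSubgroup p 1 (subgroupPow (⊤ : Subgroup G) p),
      ∀ y ∈ omegaSubgroup p 1 (subgroupPow (⊤ : Subgroup G) p), x * y = y * x := by
  have : Fact p.Prime := ⟨hp⟩
  have : Group.IsNilpotent G := hG.isNilpotent
  obtain ⟨m, hcard⟩ := IsPGroup.iff_card.1 hG
  exact omega_statement_1_general hp (fun g => hcard ▸ pow_card_eq_one') hpow
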